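/- Let K be a field of characteristic 0 and let A be a Cohen-Macaulay standard graded K-algebra with h-polynomial h_A(t). If r ≥ deg h_A(t), then the g-polynomial g_{A^⟨r⟩}(t) of the r-th Veronese subalgebra A^⟨r⟩ is the f-polynomial of a simplicial complex. -/

import Mathlib

/-!
A generic linear system of parameters of `A` is a regular sequence, and dividing by a linear
nonzerodivisor multiplies the Hilbert series by `1 - t`. Hence the coefficients `h_j` of `h_A` are
nonnegative, and with `r = m + 1` the coefficient of `t ^ i` in `(1 - t) h_{A^⟨r⟩}` is
`∑ j, h_j c_(i r - j)`, where `c_k` is the coefficient of `t ^ k` in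
`(1 + t + ⋯ + t ^ m) ^ d (1 - t ^ (m + 1))`. For `k` at most half the degree, `c_k` is a
multiplicity in the tensor power of `d + 1` copies of the `𝔰𝔩₂`-module `V_m`, and therefore counts
sorted words of length `k` subject to a ballot condition, which is inherited by subwords.

So the `i`-th coefficient of the `g`-polynomial counts words of length `i r` that consist of a
ballot word preceded by a block of `j` equal labels, for which there are `h_j` choices. Cutting such
a word into `i` pieces of length `r` gives a set of `i` distinct pieces, which determines the word
because words are sorted. Since `j ≤ deg h_A ≤ r`, the labels lie within one piece, so the family of
these sets is closed under taking subsets.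
-/

open Finset

/-! ### Simplicial complexes from words cut into pieces -/

section SimplicialComplex

/-- `f i` is the number of faces with `i` vertices of some finite simplicial complex, that is,
`∑ i, f i * t ^ i` is an `f`-polynomial. -/
def IsFVector (f : ℕ → ℤ) : Prop :=
  ∃ (n : ℕ) (Δ : Finset (Finset (Fin n))),
    ∅ ∈ Δ ∧ (∀ F ∈ Δ, ∀ G ⊆ F, G ∈ Δ) ∧ ∀ i : ℕ, (#{F ∈ Δ | #F = i} : ℤ) = f i

theorem IsFVector.truncate {f : ℕ → ℤ} (hf : IsFVector f) (T : ℕ) :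
    IsFVector fun i ↦ if i ≤ T then f i else 0 := by
  obtain ⟨n, Δ, hempty, hdown, hcard⟩ := hf
  refine ⟨n, {F ∈ Δ | #F ≤ T}, by simpa, fun F hF G hG ↦ ?_, fun i ↦ ?_⟩
  · rw [mem_filter] at hF ⊢
    exact ⟨hdown F hF.1 G hG, (card_le_card hG).trans hF.2⟩
  · rw [filter_filter]
    beta_reduce
    split_ifs with hi
    · rw [← hcard]
      congr! 3
      grind
    · rw [filter_false_of_mem (by grind), card_empty, Nat.cast_zero]

theorem isFVector_card_of_isLowerSet {α : Type*} (Δ : Finset (Finset α))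
    (hempty : ∅ ∈ Δ) (hdown : IsLowerSet (Δ : Set (Finset α))) :
    IsFVector fun i ↦ #{F ∈ Δ | #F = i} := by
  classical
  let V := Δ.sup id
  let e : Fin #V ↪ α := V.equivFin.symm.toEmbedding.trans (.subtype _)
  have exists_map_eq {F : Finset α} (hF : F ∈ Δ) : ∃ F' : Finset (Fin #V), F'.map e = F := by
    have hFe : (F : Set α) ⊆ Set.range e := fun a ha ↦
      ⟨V.equivFin ⟨a, le_sup (f := id) hF ha⟩, by simp [e]⟩
    rw [← Set.image_univ] at hFe
    obtain ⟨F', -, hF'⟩ := subset_set_image_iff.1 hFe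
    exact ⟨F', by rw [map_eq_image, hF']⟩
  refine ⟨#V, univ.filter (·.map e ∈ Δ), by simpa, fun F hF G hG ↦ ?_, fun i ↦ ?_⟩
  · rw [mem_filter_univ] at hF ⊢
    exact hdown (map_subset_map.2 hG) hF
  · rw [Nat.cast_inj]
    refine card_bij (fun F _ ↦ F.map e) (by simp) (fun F _ G _ h ↦ map_injective e h)
      fun F hF ↦ ?_
    obtain ⟨hFΔ, hFi⟩ := mem_filter.1 hF
    obtain ⟨F', rfl⟩ := exists_map_eq hFΔ
    exact ⟨F', by simpa using ⟨hFΔ, by simpa using hFi⟩, rfl⟩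

end SimplicialComplex

section Chunks

variable {α : Type*}

/-- The word `w` cut into consecutive pieces of length `r`. A final piece shorter than `r` is
dropped. -/
def chunks (r : ℕ) (w : List α) : List (List α) :=
  (List.replicate (w.length / r) r).splitLengths w

theorem length_chunks (r : ℕ) (w : List α) : (chunks r w).length = w.length / r := by
  rw [chunks, List.length_splitLengths, List.length_replicate]

theorem map_length_chunks (r : ℕ) (w : List α) :
    (chunks r w).map List.length = List.replicate (w.length / r) r :=
  List.map_splitLengths_length _ _ (by simpa using Nat.div_mul_le_self _ _)

theorem length_of_mem_chunks {r : ℕ} {u w : List α} (hu : u ∈ chunks r w) : u.length = r :=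
  List.eq_of_mem_replicate (map_length_chunks r w ▸ List.mem_map_of_mem hu)

theorem flatten_chunks {r : ℕ} {w : List α} (hw : r ∣ w.length) : (chunks r w).flatten = w :=
  List.flatten_splitLengths _ _ (by simpa using (Nat.div_mul_cancel hw).ge)

theorem length_flatten_of_forall_length_eq {r : ℕ} {ls : List (List α)}
    (hls : ∀ u ∈ ls, u.length = r) : ls.flatten.length = ls.length * r := by
  rw [List.length_flatten, List.sum_eq_card_nsmul _ r (by simpa using hls), List.length_map,
    smul_eq_mul]

theorem chunks_flatten {r : ℕ} (hr : 0 < r) {ls : List (List α)}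
    (hls : ∀ u ∈ ls, u.length = r) : chunks r ls.flatten = ls := by
  have hlen := length_flatten_of_forall_length_eq hls
  refine List.eq_iff_flatten_eq.2 ⟨flatten_chunks (hlen ▸ Nat.dvd_mul_left _ _), ?_⟩
  rw [map_length_chunks, hlen, Nat.mul_div_cancel _ hr]
  exact (List.eq_replicate_iff.2 ⟨by simp, by simpa using hls⟩).symm

variable [LinearOrder α]

/-- The properties of a set `Z` of words under which cutting the words of `Z` into pieces of
length `r` produces the faces of a simplicial complex on the words of length `r`. -/
structure IsChunkClosed (r : ℕ) (Z : Finset (List α)) : Prop where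
  pos : 0 < r
  nil_mem : [] ∈ Z
  sorted : ∀ w ∈ Z, w.Pairwise (· ≤ ·)
  replicate_notMem : ∀ x, List.replicate (2 * r) x ∉ Z
  flatten_mem : ∀ {ls ls' : List (List α)}, (∀ u ∈ ls, u.length = r) → ls.flatten ∈ Z →
    ls'.Sublist ls → ls'.flatten ∈ Z

/-- The complex whose faces are the sets of pieces of the words of `Z` that can be cut into
pieces of length `r`. -/
def chunkComplex (r : ℕ) (Z : Finset (List α)) : Finset (Finset (List α)) :=
  {w ∈ Z | r ∣ w.length}.image fun w ↦ (chunks r w).toFinset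

namespace IsChunkClosed

variable {r : ℕ} {Z : Finset (List α)}

theorem nodup_of_flatten_mem (hZ : IsChunkClosed r Z) {ls : List (List α)}
    (hls : ∀ u ∈ ls, u.length = r) (hmem : ls.flatten ∈ Z) : ls.Nodup := by
  refine List.nodup_iff_sublist.2 fun u hu ↦ ?_
  obtain ⟨x, v, rfl⟩ : ∃ x v, u = x :: v :=
    List.exists_cons_of_length_pos (hls u (hu.subset (by simp)) ▸ hZ.pos)
  have huu : (x :: v) ++ (x :: v) ∈ Z := by simpa using hZ.flatten_mem hls hmem hu
  have hsorted := List.pairwise_append.1 (hZ.sorted _ huu)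
  have hconst : ∀ y ∈ x :: v, x = y := fun y hy ↦
    (List.forall_mem_cons.2 ⟨le_rfl, (List.pairwise_cons.1 hsorted.1).1⟩ y hy).antisymm
      (hsorted.2.2 y hy x (by simp))
  have hrep : x :: v = List.replicate r x :=
    List.eq_replicate_iff.2 ⟨hls _ (hu.subset (by simp)), fun y hy ↦ (hconst y hy).symm⟩
  rw [hrep, ← List.replicate_add, ← two_mul] at huu
  exact hZ.replicate_notMem x huu

theorem flatten_eq_of_perm (hZ : IsChunkClosed r Z) {ls ls' : List (List α)}
    (hmem : ls.flatten ∈ Z) (hmem' : ls'.flatten ∈ Z) (hperm : ls.Perm ls') :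
    ls.flatten = ls'.flatten :=
  hperm.flatten.eq_of_pairwise (fun _ _ _ _ ↦ le_antisymm) (hZ.sorted _ hmem) (hZ.sorted _ hmem')

theorem nodup_chunks (hZ : IsChunkClosed r Z) {w : List α} (hw : w ∈ Z) (hdvd : r ∣ w.length) :
    (chunks r w).Nodup :=
  hZ.nodup_of_flatten_mem (fun _ ↦ length_of_mem_chunks) (by rwa [flatten_chunks hdvd])

theorem injOn_toFinset_chunks (hZ : IsChunkClosed r Z) :
    Set.InjOn (fun w ↦ (chunks r w).toFinset) {w ∈ Z | r ∣ w.length} := by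
  rintro w ⟨hw, hdvd⟩ w' ⟨hw', hdvd'⟩ heq
  rw [← flatten_chunks hdvd, ← flatten_chunks hdvd']
  refine hZ.flatten_eq_of_perm (by rwa [flatten_chunks hdvd]) (by rwa [flatten_chunks hdvd']) ?_
  exact List.perm_of_nodup_nodup_toFinset_eq (hZ.nodup_chunks hw hdvd)
    (hZ.nodup_chunks hw' hdvd') heq

theorem card_toFinset_chunks (hZ : IsChunkClosed r Z) {w : List α} (hw : w ∈ Z)
    (hdvd : r ∣ w.length) : #(chunks r w).toFinset * r = w.length := by
  rw [List.toFinset_card_of_nodup (hZ.nodup_chunks hw hdvd), length_chunks,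
    Nat.div_mul_cancel hdvd]

theorem mem_chunkComplex (hZ : IsChunkClosed r Z) {F : Finset (List α)} :
    F ∈ chunkComplex r Z ↔
      ∃ ls : List (List α), (∀ u ∈ ls, u.length = r) ∧ ls.flatten ∈ Z ∧ ls.toFinset = F := by
  rw [chunkComplex, mem_image]
  constructor
  · rintro ⟨w, hw, rfl⟩
    rw [mem_filter] at hw
    exact ⟨chunks r w, fun _ ↦ length_of_mem_chunks, by rw [flatten_chunks hw.2]; exact hw.1, rfl⟩
  · rintro ⟨ls, hls, hmem, rfl⟩
    refine ⟨ls.flatten, mem_filter.2 ⟨hmem, ?_⟩, by rw [chunks_flatten hZ.pos hls]⟩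
    exact length_flatten_of_forall_length_eq hls ▸ Nat.dvd_mul_left _ _

theorem isLowerSet_chunkComplex (hZ : IsChunkClosed r Z) :
    IsLowerSet (chunkComplex r Z : Set (Finset (List α))) := by
  intro F G hG hF
  rw [mem_coe, hZ.mem_chunkComplex] at hF ⊢
  obtain ⟨ls, hls, hmem, rfl⟩ := hF
  refine ⟨ls.filter (· ∈ G), fun u hu ↦ hls u (List.mem_of_mem_filter hu),
    hZ.flatten_mem hls hmem List.filter_sublist, ?_⟩
  ext u
  simpa using fun hu ↦ List.mem_toFinset.1 (hG hu)

theorem card_chunkComplex (hZ : IsChunkClosed r Z) (i : ℕ) :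
    #{F ∈ chunkComplex r Z | #F = i} = #{w ∈ Z | w.length = i * r} := by
  rw [chunkComplex, filter_image, card_image_of_injOn, filter_filter]
  · congr 1
    refine filter_congr fun w hw ↦ ⟨?_, fun hlen ↦ ?_⟩
    · rintro ⟨hdvd, rfl⟩
      exact (hZ.card_toFinset_chunks hw hdvd).symm
    · have hdvd : r ∣ w.length := hlen ▸ Nat.dvd_mul_left _ _
      exact ⟨hdvd, Nat.eq_of_mul_eq_mul_right hZ.pos (hlen ▸ hZ.card_toFinset_chunks hw hdvd)⟩
  · exact hZ.injOn_toFinset_chunks.mono fun w hw ↦ by simpa using (mem_filter.1 hw).1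

theorem isFVector (hZ : IsChunkClosed r Z) :
    IsFVector fun i ↦ #{w ∈ Z | w.length = i * r} := by
  simp only [← hZ.card_chunkComplex]
  exact isFVector_card_of_isLowerSet _
    (hZ.mem_chunkComplex.2 ⟨[], by simp, by simpa using hZ.nil_mem⟩)
    hZ.isLowerSet_chunkComplex

end IsChunkClosed

end Chunks

/-! ### Ballot words -/

open LaurentPolynomial in
/-- `(1 + T + ⋯ + T ^ m) ^ d * (1 - T ^ (m + 1))`. Since `T ^ (m + 1) - 1` is `T - 1` times the
character of the irreducible `𝔰𝔩₂`-module `V_m`, the coefficient of `T ^ k` is the multiplicity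
of the highest weight `(d + 1) * m - 2 * k` in the tensor power of `d + 1` copies of `V_m`, up to
the reflection `k ↦ (d + 1) * m + 1 - k`, which changes its sign. -/
noncomputable def ballotLaurent (m d : ℕ) : ℤ[T;T⁻¹] :=
  (∑ b ∈ range (m + 1), T b) ^ d * (1 - T (m + 1))

section BallotLaurent

open LaurentPolynomial

theorem coeff_mul_T {R : Type*} [Semiring R] (p : R[T;T⁻¹]) (n k : ℤ) :
    (p * T n).coeff k = p.coeff (k - n) := by
  rw [T, AddMonoidAlgebra.coeff_mul_single_apply, mul_one, sub_eq_add_neg]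

variable (m d : ℕ)

theorem coeff_ballotLaurent_zero (k : ℤ) :
    (ballotLaurent m 0).coeff k = (if k = 0 then 1 else 0) - if k = m + 1 then 1 else 0 := by
  rw [ballotLaurent, pow_zero, one_mul, ← T_zero, AddMonoidAlgebra.coeff_sub,
    Finsupp.sub_apply, T_apply, T_apply]
  simp only [eq_comm]

theorem coeff_ballotLaurent_succ (k : ℤ) :
    (ballotLaurent m (d + 1)).coeff k =
      ∑ b ∈ range (m + 1), (ballotLaurent m d).coeff (k - b) := by
  have h : ballotLaurent m (d + 1) = ∑ b ∈ range (m + 1), ballotLaurent m d * T b := by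
    rw [ballotLaurent, ballotLaurent, pow_succ, ← mul_sum]
    ring
  simp only [h, AddMonoidAlgebra.coeff_sum, Finsupp.finsetSum_apply, coeff_mul_T]

theorem invert_ballotLaurent :
    invert (ballotLaurent m d) * T ((d + 1) * m + 1) = -ballotLaurent m d := by
  have hsum : (∑ b ∈ range (m + 1), T (-b : ℤ)) * T m =
      ∑ b ∈ range (m + 1), (T b : ℤ[T;T⁻¹]) := by
    rw [← sum_range_reflect, sum_mul]
    refine sum_congr rfl fun b hb ↦ ?_
    rw [← T_add]
    congr 1
    grind
  have hfactor : (1 - T (-(m + 1)) : ℤ[T;T⁻¹]) * T (m + 1) = -(1 - T (m + 1)) := by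
    rw [sub_mul, one_mul, ← T_add, neg_add_cancel, T_zero, neg_sub]
  have hexp : (T ((d + 1) * m + 1) : ℤ[T;T⁻¹]) = T m ^ d * T (m + 1) := by
    rw [T_pow, ← T_add]
    congr 1
    ring
  simp only [ballotLaurent, map_mul, map_pow, map_sum, map_sub, map_one, invert_T, hexp]
  rw [mul_mul_mul_comm, ← mul_pow, hsum, hfactor, mul_neg]

theorem coeff_ballotLaurent_reflect (k : ℤ) :
    (ballotLaurent m d).coeff ((d + 1) * m + 1 - k) = -(ballotLaurent m d).coeff k := by
  have h := congr_arg (fun p : ℤ[T;T⁻¹] ↦ p.coeff k) (invert_ballotLaurent m d)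
  simpa only [coeff_mul_T, invert_apply, neg_sub, AddMonoidAlgebra.coeff_neg,
    Finsupp.neg_apply] using h

theorem sum_coeff_ballotLaurent_eq_zero {k : ℤ} (hk : 2 * k ≤ (d + 2) * m + 1) :
    ∑ b ∈ range (m + 1) with ¬2 * k - (b : ℕ) ≤ (d + 1) * m,
      (ballotLaurent m d).coeff (k - b) = 0 := by
  rw [show ((d : ℤ) + 2) * m = (d + 1) * m + m by ring] at hk
  obtain ⟨reflect, hreflect⟩ : ∃ f : ℕ → ℕ, ∀ {b : ℕ}, ¬2 * k - (b : ℕ) ≤ (d + 1) * m →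
      (f b : ℤ) = 2 * k - (d + 1) * m - 1 - b :=
    ⟨fun b ↦ (2 * k - (d + 1) * m - 1 - b).toNat, fun _ ↦ Int.toNat_of_nonneg (by lia)⟩
  have hneg {b : ℕ} (hb : ¬2 * k - (b : ℕ) ≤ (d + 1) * m) :
      (ballotLaurent m d).coeff (k - b) + (ballotLaurent m d).coeff (k - reflect b) = 0 := by
    rw [add_eq_zero_iff_neg_eq, ← coeff_ballotLaurent_reflect, hreflect hb]
    congr 1
    ring
  refine sum_involution (fun b _ ↦ reflect b) (fun b hb ↦ hneg (mem_filter.1 hb).2) ?_ ?_ ?_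
  · intro b hb hne heq
    have := hneg (mem_filter.1 hb).2
    rw [heq] at this
    lia
  · intro b hb
    rw [mem_filter, mem_range] at hb ⊢
    have := hreflect hb.2
    lia
  · intro b hb
    rw [mem_filter, mem_range] at hb
    have := hreflect hb.2
    have := hreflect (b := reflect b) (by lia)
    lia

end BallotLaurent

section BallotWords

/-- The words `0 ^ b₀ 1 ^ b₁ ⋯` in the letters `0, …, d - 1` in which every letter occurs at most
`m` times and every prefix `u` followed by `b` further letters `e` satisfies
`2 * |u| + b ≤ (e + 1) * m`. By the Clebsch–Gordan rule they enumerate the highest weight vectors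
of the tensor power of `d + 1` copies of the `𝔰𝔩₂`-module `V_m`: the word `w` has weight
`(d + 1) * m - 2 * |w|`, and tensoring a summand `V_l` with `V_m` gives `V_(l + m - 2 * b)` for
`b ≤ min l m`. -/
def ballotWords (m : ℕ) : ℕ → Finset (List ℕ)
  | 0 => {[]}
  | d + 1 => {p ∈ ballotWords m d ×ˢ range (m + 1) | 2 * p.1.length + p.2 ≤ (d + 1) * m}.image
      fun p ↦ p.1 ++ List.replicate p.2 d

variable {m d : ℕ}

theorem mem_ballotWords_succ {w : List ℕ} :
    w ∈ ballotWords m (d + 1) ↔ ∃ u ∈ ballotWords m d, ∃ b ≤ m,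
      2 * u.length + b ≤ (d + 1) * m ∧ u ++ List.replicate b d = w := by
  simp only [ballotWords, mem_image, mem_filter, mem_product, mem_range, Prod.exists]
  grind

theorem lt_of_mem_ballotWords {w : List ℕ} (hw : w ∈ ballotWords m d) : ∀ x ∈ w, x < d := by
  induction d generalizing w with
  | zero => simp_all [ballotWords]
  | succ d ih =>
    obtain ⟨u, hu, b, -, -, rfl⟩ := mem_ballotWords_succ.1 hw
    grind

theorem pairwise_of_mem_ballotWords {w : List ℕ} (hw : w ∈ ballotWords m d) :
    w.Pairwise (· ≤ ·) := by
  induction d generalizing w with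
  | zero => simp_all [ballotWords]
  | succ d ih =>
    obtain ⟨u, hu, b, -, -, rfl⟩ := mem_ballotWords_succ.1 hw
    have := lt_of_mem_ballotWords hu
    exact List.pairwise_append.2 ⟨ih hu, by simp, by grind⟩

theorem count_le_of_mem_ballotWords {w : List ℕ} (hw : w ∈ ballotWords m d) (x : ℕ) :
    w.count x ≤ m := by
  induction d generalizing w with
  | zero => simp_all [ballotWords]
  | succ d ih =>
    obtain ⟨u, hu, b, hb, -, rfl⟩ := mem_ballotWords_succ.1 hw
    rw [List.count_append, List.count_replicate]
    split_ifs with hx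
    · obtain rfl : d = x := by simpa using hx
      rwa [List.count_eq_zero_of_not_mem fun h ↦ (lt_of_mem_ballotWords hu _ h).false, zero_add]
    · exact ih hu

theorem mem_ballotWords_of_sublist {w v : List ℕ} (hw : w ∈ ballotWords m d)
    (hv : v.Sublist w) : v ∈ ballotWords m d := by
  induction d generalizing w v with
  | zero => simp_all [ballotWords]
  | succ d ih =>
    obtain ⟨u, hu, b, hb, hub, rfl⟩ := mem_ballotWords_succ.1 hw
    obtain ⟨v₁, v₂, rfl, hv₁, hv₂⟩ := List.sublist_append_iff.1 hv
    obtain ⟨c, hc, rfl⟩ := List.sublist_replicate_iff.1 hv₂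
    have := hv₁.length_le
    exact mem_ballotWords_succ.2 ⟨v₁, ih hu hv₁, c, by lia, by lia, rfl⟩

theorem nil_mem_ballotWords (m d : ℕ) : [] ∈ ballotWords m d := by
  induction d with
  | zero => simp [ballotWords]
  | succ d ih => exact mem_ballotWords_succ.2 ⟨[], ih, 0, by simp⟩

theorem injOn_append_replicate :
    Set.InjOn (fun p : List ℕ × ℕ ↦ p.1 ++ List.replicate p.2 d) {p | ∀ x ∈ p.1, x < d} := by
  rintro ⟨u, b⟩ hu ⟨v, c⟩ hv h
  have count_eq_zero {w : List ℕ} (hw : ∀ x ∈ w, x < d) : w.count d = 0 :=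
    List.count_eq_zero_of_not_mem fun hd ↦ (hw d hd).false
  obtain rfl : b = c := by
    simpa [count_eq_zero hu, count_eq_zero hv] using congr_arg (List.count d) h
  simpa using h

theorem card_ballotWords_succ (k : ℤ) :
    #{w ∈ ballotWords m (d + 1) | (w.length : ℤ) = k} =
      ∑ b ∈ range (m + 1) with 2 * k - (b : ℕ) ≤ (d + 1) * m,
        #{w ∈ ballotWords m d | (w.length : ℤ) = k - b} := by
  rw [ballotWords, filter_image, card_image_of_injOn, filter_filter, card_filter,
    sum_product_right, sum_filter]
  · refine sum_congr rfl fun b _ ↦ ?_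
    rw [← card_filter, ← card_empty, ← apply_ite card]
    congr 1
    ext w
    simp
    grind
  · refine injOn_append_replicate.mono fun p hp ↦ ?_
    simp only [coe_filter, mem_filter, mem_product] at hp
    exact lt_of_mem_ballotWords hp.1.1.1

theorem card_ballotWords {k : ℤ} (hk : 2 * k ≤ (d + 1) * m + 1) :
    #{w ∈ ballotWords m d | (w.length : ℤ) = k} = (ballotLaurent m d).coeff k := by
  induction d generalizing k with
  | zero =>
    rw [coeff_ballotLaurent_zero, ballotWords, filter_singleton]
    grind
  | succ d ih =>
    rw [card_ballotWords_succ, coeff_ballotLaurent_succ, Nat.cast_sum,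
      ← sum_filter_add_sum_filter_not (range (m + 1)) (fun b ↦ 2 * k - (b : ℕ) ≤ (d + 1) * m),
      sum_coeff_ballotLaurent_eq_zero m d (by push_cast at hk; linarith), add_zero]
    refine sum_congr rfl fun b hb ↦ ih ?_
    grind

end BallotWords

/-! ### Labelled words -/

section LabelledWords

variable {α : Type*}

/-- The word `w` preceded by `j` copies of the label `q`. -/
def labelWord (j q : ℕ) (w : List α) : List (ℕ ⊕ₗ α) :=
  List.replicate j (Sum.inlₗ q) ++ w.map Sum.inrₗ

theorem length_labelWord (j q : ℕ) (w : List α) : (labelWord j q w).length = j + w.length := by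
  simp [labelWord]

theorem labelWord_inj {j q j' q' : ℕ} {w w' : List α} (h : labelWord j q w = labelWord j' q' w') :
    j = j' ∧ (j ≠ 0 → q = q') ∧ w = w' := by
  obtain rfl : j = j' := by
    simpa [labelWord, List.countP_replicate, Function.comp_def] using
      congr_arg (List.countP fun x ↦ (ofLex x).isLeft) h
  obtain ⟨hlabel, hw⟩ := List.append_inj h (by simp)
  refine ⟨rfl, fun hj ↦ ?_, List.map_injective_iff.2 Sum.inr_injective hw⟩
  exact Sum.inl_injective ((List.replicate_right_inj hj).1 hlabel)

theorem injOn_labelWord {H : ℕ → ℕ} (hH : H 0 = 1) :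
    Set.InjOn (fun p : Σ _ : ℕ, ℕ × List α ↦ labelWord p.1 p.2.1 p.2.2)
      {p | p.2.1 < H p.1} := by
  rintro ⟨j, q, w⟩ hq ⟨j', q', w'⟩ hq' h
  obtain ⟨rfl, hqq', rfl⟩ := labelWord_inj h
  obtain rfl : q = q' := by
    rcases eq_or_ne j 0 with rfl | hj
    · simp_all
    · exact hqq' hj
  rfl

theorem labelWord_ne_replicate {j n : ℕ} {w : List α} (hj : j < n)
    (hw : ∀ y, w ≠ List.replicate n y) (q : ℕ) (x : ℕ ⊕ₗ α) :
    labelWord j q w ≠ List.replicate n x := by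
  intro h
  obtain ⟨hlen, hlabel, hword⟩ := List.append_eq_replicate_iff.1 h
  obtain ⟨q' | y, rfl⟩ := toLex.surjective x
  · obtain rfl : w = [] := List.eq_nil_iff_forall_not_mem.2 fun y hy ↦
      Sum.inr_ne_inl ((List.eq_replicate_iff.1 hword).2 _ (List.mem_map_of_mem hy))
    simp at hlen
    lia
  · obtain rfl : j = 0 := by_contra fun hj0 ↦
      Sum.inl_ne_inr ((List.eq_replicate_iff.1 hlabel).2 _ (List.mem_replicate.2 ⟨hj0, rfl⟩))
    rw [List.length_map, List.length_replicate, zero_add] at hlen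
    rw [List.length_map, hlen] at hword
    have hinj : Function.Injective (Sum.inrₗ : α → ℕ ⊕ₗ α) := Sum.inr_injective
    exact hw y (List.map_injective_iff.2 hinj (by rw [hword, List.map_replicate]))

variable [LinearOrder α]

/-- The words of `W`, preceded by `j ≤ s` copies of a label, of which there are `H j`. -/
def labelledWords (s : ℕ) (H : ℕ → ℕ) (W : Finset (List α)) : Finset (List (ℕ ⊕ₗ α)) :=
  ((range (s + 1)).sigma fun j ↦ range (H j) ×ˢ W).image fun p ↦ labelWord p.1 p.2.1 p.2.2

variable {r s : ℕ} {H : ℕ → ℕ} {W : Finset (List α)}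

theorem mem_labelledWords {z : List (ℕ ⊕ₗ α)} :
    z ∈ labelledWords s H W ↔ ∃ j ≤ s, ∃ q < H j, ∃ w ∈ W, labelWord j q w = z := by
  simp only [labelledWords, mem_image, mem_sigma, mem_product, mem_range, Sigma.exists,
    Prod.exists]
  grind

theorem card_labelledWords (hH : H 0 = 1) (k : ℤ) :
    #{z ∈ labelledWords s H W | (z.length : ℤ) = k} =
      ∑ j ∈ range (s + 1), H j * #{w ∈ W | (w.length : ℤ) = k - j} := by
  rw [labelledWords, filter_image, card_image_of_injOn, card_filter, sum_sigma]
  · refine sum_congr rfl fun j _ ↦ ?_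
    simp only [length_labelWord, Nat.cast_add, eq_sub_iff_add_eq']
    rw [← card_filter, filter_product_right fun w : List α ↦ (j : ℤ) + w.length = k,
      card_product, card_range]
  · refine (injOn_labelWord hH).mono fun p hp ↦ ?_
    simp only [coe_filter, mem_sigma, mem_product, mem_range] at hp
    exact hp.1.2.1

theorem pairwise_labelWord {w : List α} (hw : w.Pairwise (· ≤ ·)) (j q : ℕ) :
    (labelWord j q w).Pairwise (· ≤ ·) := by
  refine List.pairwise_append.2 ⟨by simp, ?_, ?_⟩
  · exact hw.map _ fun _ _ ↦ Sum.Lex.inr_le_inr_iff.2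
  · simp only [List.mem_replicate, List.mem_map]
    rintro _ ⟨-, rfl⟩ _ ⟨x, -, rfl⟩
    exact Sum.Lex.inl_le_inr _ _

/-- Since `s ≤ r`, all labels lie in the first piece of length `r`, so that a sublist of the list
of pieces contains all of them or none. -/
theorem flatten_mem_labelledWords (hs : s ≤ r) (hH : 0 < H 0)
    (hW : ∀ w ∈ W, ∀ v, v.Sublist w → v ∈ W) {ls ls' : List (List (ℕ ⊕ₗ α))}
    (hls : ∀ u ∈ ls, u.length = r) (hmem : ls.flatten ∈ labelledWords s H W)
    (hsub : ls'.Sublist ls) : ls'.flatten ∈ labelledWords s H W := by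
  cases ls with
  | nil => rwa [List.sublist_nil.1 hsub]
  | cons u rest =>
    obtain ⟨j, hj, q, hq, w, hw, hzw⟩ := mem_labelledWords.1 hmem
    rw [List.flatten_cons, labelWord] at hzw
    obtain ⟨u', rfl⟩ : List.replicate j (Sum.inlₗ q) <+: u :=
      List.prefix_of_prefix_length_le (List.prefix_append _ _)
        (hzw ▸ List.prefix_append u rest.flatten) (by simp [hls u]; lia)
    rw [List.append_assoc] at hzw
    obtain ⟨v, v', rfl, rfl, hv'⟩ := List.map_eq_append_iff.1 (List.append_cancel_left hzw)
    obtain hrest | ⟨t, rfl, ht⟩ := List.sublist_cons_iff.1 hsub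
    · obtain ⟨x, hx, hxv⟩ := List.sublist_map_iff.1 (hv' ▸ hrest.flatten)
      exact mem_labelledWords.2 ⟨0, by lia, 0, hH, x,
        hW _ hw _ (hx.trans (List.sublist_append_right _ _)), by simp [labelWord, hxv]⟩
    · obtain ⟨x, hx, hxv⟩ := List.sublist_map_iff.1 (hv' ▸ ht.flatten)
      exact mem_labelledWords.2 ⟨j, hj, q, hq, v ++ x,
        hW _ hw _ (hx.append_left _), by simp [labelWord, hxv]⟩

theorem isChunkClosed_labelledWords (hr : 0 < r) (hs : s ≤ r) (hH : 0 < H 0)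
    (hnil : [] ∈ W) (hsorted : ∀ w ∈ W, w.Pairwise (· ≤ ·))
    (hrep : ∀ x, List.replicate (2 * r) x ∉ W) (hsub : ∀ w ∈ W, ∀ v, v.Sublist w → v ∈ W) :
    IsChunkClosed r (labelledWords s H W) where
  pos := hr
  nil_mem := mem_labelledWords.2 ⟨0, s.zero_le, 0, hH, [], hnil, rfl⟩
  sorted z hz := by
    obtain ⟨j, -, q, -, w, hw, rfl⟩ := mem_labelledWords.1 hz
    exact pairwise_labelWord (hsorted w hw) j q
  replicate_notMem x hx := by
    obtain ⟨j, hj, q, -, w, hw, heq⟩ := mem_labelledWords.1 hx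
    exact labelWord_ne_replicate (by lia) (fun y hy ↦ hrep y (hy ▸ hw)) q x heq
  flatten_mem := flatten_mem_labelledWords hs hH hsub

end LabelledWords

/-! ### Numerators of Veronese series -/

section Veronese

open Polynomial LaurentPolynomial

/-- The generating series `∑ a (i * r) t ^ i` of the `r`-th Veronese subalgebra of an algebra with
generating series `F = ∑ a i t ^ i`. -/
noncomputable def veronese {R : Type*} [Semiring R] (r : ℕ) (F : PowerSeries R) : PowerSeries R :=
  .mk fun i ↦ F.coeff (i * r)

theorem veronese_mul_one_sub_X_pow {R : Type*} [Ring R] {r : ℕ} (hr : 0 < r) (F : PowerSeries R) :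
    veronese r (F * (1 - .X ^ r)) = veronese r F * (1 - .X) := by
  ext i
  simp only [veronese, mul_sub, mul_one, map_sub, PowerSeries.coeff_mk]
  congr 1
  cases i with
  | zero => simp [PowerSeries.coeff_mul_X_pow', hr.ne']
  | succ i => rw [PowerSeries.coeff_succ_mul_X, add_one_mul, PowerSeries.coeff_mul_X_pow,
      PowerSeries.coeff_mk]

theorem veronese_mul_one_sub_X_pow_pow {R : Type*} [Ring R] {r : ℕ} (hr : 0 < r)
    (F : PowerSeries R) (d : ℕ) :
    veronese r (F * (1 - .X ^ r) ^ d) = veronese r F * (1 - .X) ^ d := by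
  induction d with
  | zero => simp
  | succ d ih => rw [pow_succ, ← mul_assoc, veronese_mul_one_sub_X_pow hr, ih, pow_succ, mul_assoc]

theorem coeff_toLaurent_natCast {R : Type*} [Semiring R] (p : R[X]) (n : ℕ) :
    (toLaurent p).coeff n = p.coeff n := by
  rw [coeff_toLaurent]
  exact Finsupp.mapDomain_apply Nat.castEmbedding.injective _ _

theorem coeff_toLaurent_mul {R : Type*} [Semiring R] (p : R[X]) (q : R[T;T⁻¹]) (k : ℤ) :
    (toLaurent p * q).coeff k =
      ∑ j ∈ range (p.natDegree + 1), p.coeff j * q.coeff (k - j) := by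
  conv_lhs => rw [p.as_sum_range_C_mul_X_pow]
  simp [sum_mul, ← single_eq_C_mul_T, AddMonoidAlgebra.coeff_single_mul_apply,
    neg_add_eq_sub]

theorem natDegree_sum_range_X_pow_le {R : Type*} [Semiring R] (m : ℕ) :
    (∑ b ∈ range (m + 1), X ^ b : R[X]).natDegree ≤ m :=
  natDegree_sum_le_of_forall_le _ _ fun b hb ↦
    (natDegree_X_pow_le b).trans (mem_range_succ_iff.1 hb)

theorem coeff_mul_one_sub_X {R : Type*} [Ring R] (p : R[X]) (i : ℕ) :
    (p * (1 - X)).coeff i = if i = 0 then p.coeff 0 else p.coeff i - p.coeff (i - 1) := by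
  cases i <;> simp [mul_sub, coeff_mul_X]

/-- If `h / (1 - t) ^ d` is the generating series of `a`, then `IsVeroneseNumerator m d h p` says
that `p / (1 - t) ^ d` is the generating series of `i ↦ a (i * (m + 1))`. The denominators are
eliminated by writing `h / (1 - t) ^ d` as `h * (1 + ⋯ + t ^ m) ^ d / (1 - t ^ (m + 1)) ^ d`. -/
def IsVeroneseNumerator {R : Type*} [Ring R] (m d : ℕ) (h p : R[X]) : Prop :=
  (p : PowerSeries R) =
    veronese (m + 1) (h * (∑ b ∈ range (m + 1), X ^ b) ^ d : R[X])

theorem isVeroneseNumerator_of_mul_pow {R : Type*} [CommRing R] {m d : ℕ} {h p : R[X]}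
    {F : PowerSeries R} (hh : (h : PowerSeries R) = F * (1 - .X) ^ d)
    (hp : (p : PowerSeries R) = veronese (m + 1) F * (1 - .X) ^ d) :
    IsVeroneseNumerator m d h p := by
  have hgeom : (1 - .X) * ((∑ b ∈ range (m + 1), X ^ b : R[X]) : PowerSeries R) =
      1 - .X ^ (m + 1) := by
    rw [← mul_neg_geom_sum, ← coeToPowerSeries.ringHom_apply, map_sum]
    simp
  rw [IsVeroneseNumerator, hp, ← veronese_mul_one_sub_X_pow_pow m.succ_pos, ← hgeom, mul_pow,
    ← mul_assoc, ← hh, Polynomial.coe_mul, Polynomial.coe_pow]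

namespace IsVeroneseNumerator

variable {m d : ℕ}

theorem coeff_eq {R : Type*} [Ring R] {h p : R[X]} (hp : IsVeroneseNumerator m d h p) (i : ℕ) :
    p.coeff i = (h * (∑ b ∈ range (m + 1), X ^ b) ^ d).coeff (i * (m + 1)) := by
  rw [← coeff_coe, hp, veronese, PowerSeries.coeff_mk, coeff_coe]

theorem coeff_zero {R : Type*} [Ring R] {h p : R[X]} (hp : IsVeroneseNumerator m d h p) :
    p.coeff 0 = h.coeff 0 := by
  have hgeom : (∑ b ∈ range (m + 1), X ^ b : R[X]).coeff 0 = 1 := by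
    simp [coeff_X_pow]
  rw [hp.coeff_eq, zero_mul, mul_coeff_zero, ← constantCoeff_apply (_ ^ d), map_pow,
    constantCoeff_apply, hgeom, one_pow, mul_one]

theorem coe_mul_one_sub_X {R : Type*} [CommRing R] {h p : R[X]}
    (hp : IsVeroneseNumerator m d h p) :
    ((p * (1 - X) : R[X]) : PowerSeries R) =
      veronese (m + 1) (h * (∑ b ∈ range (m + 1), X ^ b) ^ d * (1 - X ^ (m + 1)) : R[X]) := by
  rw [Polynomial.coe_mul, Polynomial.coe_mul _ (1 - X ^ (m + 1)), Polynomial.coe_sub,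
    Polynomial.coe_sub, Polynomial.coe_one, Polynomial.coe_pow, coe_X, hp,
    veronese_mul_one_sub_X_pow m.succ_pos]

theorem natDegree_mul_le {R : Type*} [Ring R] {h p : R[X]} (hp : IsVeroneseNumerator m d h p)
    (hp0 : p ≠ 0) : p.natDegree * (m + 1) ≤ h.natDegree + d * m := by
  have hlead : p.coeff p.natDegree ≠ 0 := by simpa using hp0
  rw [hp.coeff_eq] at hlead
  calc p.natDegree * (m + 1)
      ≤ (h * (∑ b ∈ range (m + 1), X ^ b) ^ d).natDegree := le_natDegree_of_ne_zero hlead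
    _ ≤ h.natDegree + d * (∑ b ∈ range (m + 1), X ^ b : R[X]).natDegree :=
        natDegree_mul_le_of_le le_rfl natDegree_pow_le
    _ ≤ h.natDegree + d * m := by gcongr; exact natDegree_sum_range_X_pow_le m

variable {h p : ℤ[X]}

theorem coeff_mul_one_sub_X_eq (hp : IsVeroneseNumerator m d h p) (i : ℕ) :
    (p * (1 - X)).coeff i = ∑ j ∈ range (h.natDegree + 1),
      h.coeff j * (ballotLaurent m d).coeff ((i * (m + 1) : ℕ) - j) := by
  have hLaurent : toLaurent (h * (∑ b ∈ range (m + 1), X ^ b) ^ d * (1 - X ^ (m + 1))) =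
      toLaurent h * ballotLaurent m d := by
    simp [ballotLaurent, mul_assoc]
  rw [← coeff_toLaurent_mul, ← hLaurent, coeff_toLaurent_natCast, ← coeff_coe,
    hp.coe_mul_one_sub_X, veronese, PowerSeries.coeff_mk, coeff_coe]

theorem coeff_mul_one_sub_X_eq_card (hp : IsVeroneseNumerator m d h p) (hp0 : p ≠ 0)
    (hdeg : h.natDegree ≤ m + 1) {i : ℕ} (hi : i ≤ p.natDegree / 2) :
    (p * (1 - X)).coeff i = ∑ j ∈ range (h.natDegree + 1),
      h.coeff j * #{w ∈ ballotWords m d | (w.length : ℤ) = (i * (m + 1) : ℕ) - j} := by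
  rw [hp.coeff_mul_one_sub_X_eq]
  have hle : 2 * (i * (m + 1)) ≤ h.natDegree + d * m := calc
    2 * (i * (m + 1)) = 2 * i * (m + 1) := by ring
    _ ≤ p.natDegree * (m + 1) := by gcongr; lia
    _ ≤ h.natDegree + d * m := hp.natDegree_mul_le hp0
  refine sum_congr rfl fun j _ ↦ ?_
  rw [card_ballotWords]
  rw [add_one_mul]
  lia

theorem isFVector (hp : IsVeroneseNumerator m d h p) (hdeg : h.natDegree ≤ m + 1)
    (hnonneg : ∀ j, 0 ≤ h.coeff j) (hone : h.coeff 0 = 1) :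
    IsFVector fun i ↦ if i ≤ p.natDegree / 2 then (p * (1 - X)).coeff i else 0 := by
  have hp0 : p ≠ 0 := by
    rintro rfl
    simpa [hone] using hp.coeff_zero
  let H (j : ℕ) : ℕ := (h.coeff j).toNat
  have hH : H 0 = 1 := by simp [H, hone]
  have hcast (j : ℕ) : (H j : ℤ) = h.coeff j := Int.toNat_of_nonneg (hnonneg j)
  have hZ : IsChunkClosed (m + 1) (labelledWords h.natDegree H (ballotWords m d)) := by
    refine isChunkClosed_labelledWords m.succ_pos hdeg (by lia) (nil_mem_ballotWords m d)
      (fun _ ↦ pairwise_of_mem_ballotWords) (fun x hx ↦ ?_) fun _ hw _ ↦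
        mem_ballotWords_of_sublist hw
    have := count_le_of_mem_ballotWords hx x
    rw [List.count_replicate_self] at this
    lia
  convert hZ.isFVector.truncate (p.natDegree / 2) using 3 with i hi
  rw [hp.coeff_mul_one_sub_X_eq_card hp0 hdeg hi]
  simp_rw [← hcast, ← Nat.cast_mul, ← Nat.cast_sum, ← card_labelledWords hH, Nat.cast_inj]

end IsVeroneseNumerator

end Veronese

/-! ### Linear systems of parameters and Hilbert series -/

section LinearParameters

theorem ringKrullDim_quotient_sup_span_singleton_le {R : Type*} [CommRing R] {I : Ideal R} {x : R}
    {n : ℕ} (hdim : ringKrullDim (R ⧸ I) ≤ (n + 1 : ℕ))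
    (hx : ∀ P ∈ I.minimalPrimes, x ∈ P → P.IsMaximal) :
    ringKrullDim (R ⧸ (I ⊔ Ideal.span {x})) ≤ n := by
  rw [ringKrullDim_quotient] at hdim ⊢
  refine iSup_le fun l ↦ ?_
  have hmem (p : PrimeSpectrum.zeroLocus ((I ⊔ Ideal.span {x} : Ideal R) : Set R)) :
      I ≤ p.1.asIdeal ∧ x ∈ p.1.asIdeal := by
    simpa [Ideal.span_singleton_le_iff_mem] using sup_le_iff.1 (SetLike.coe_subset_coe.1 p.2)
  obtain ⟨P, hP, hPhead⟩ := Ideal.exists_minimalPrimes_le (hmem l.head).1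
  by_cases hxP : x ∈ P
  · have hlength : l.length = 0 := by
      by_contra hne
      have hlt : l.head.1.asIdeal < l.last.1.asIdeal :=
        l.rel_of_lt (by simp [Fin.lt_def]; lia)
      exact l.last.1.isPrime.ne_top ((hx P hP hxP).out.2 _ (hPhead.trans_lt hlt))
    rw [hlength]
    exact_mod_cast Nat.zero_le n
  · let p : PrimeSpectrum.zeroLocus (I : Set R) := ⟨⟨P, hP.1.1⟩, hP.1.2⟩
    let l' : LTSeries (PrimeSpectrum.zeroLocus (I : Set R)) :=
      l.map (fun q ↦ ⟨q.1, (hmem q).1⟩) fun _ _ h ↦ h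
    have hlt : p < l'.head := by
      refine lt_of_le_of_ne hPhead fun h ↦ hxP ?_
      have : P = l.head.1.asIdeal := congrArg (fun q ↦ q.1.asIdeal) h
      exact this ▸ (hmem l.head).2
    have hcons := (Order.LTSeries.length_le_krullDim (l'.cons p hlt)).trans hdim
    rw [RelSeries.cons_length, Nat.cast_le] at hcons
    exact Nat.cast_le.2 (Nat.le_of_succ_le_succ hcons)

theorem exists_mem_forall_mem_imp_le {K V : Type*} [Field K] [Infinite K] [AddCommGroup V]
    [Module K V] (U : Submodule K V) {S : Set (Submodule K V)} (hS : S.Finite) :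
    ∃ x ∈ U, ∀ W ∈ S, x ∈ W → U ≤ W := by
  classical
  let T : Finset (Subspace K U) := (hS.toFinset.image (Submodule.comap U.subtype)).erase ⊤
  obtain ⟨x, hx⟩ := (Set.ne_univ_iff_exists_notMem _).1
    (Subspace.biUnion_ne_univ_of_top_notMem (s := T) (by simp [T]))
  simp only [Set.mem_iUnion, not_exists] at hx
  refine ⟨x, x.2, fun W hW hxW ↦ ?_⟩
  by_contra hUW
  refine hx (W.comap U.subtype) ?_ hxW
  simpa [T, Submodule.comap_subtype_eq_top, hUW] using ⟨W, hW, rfl⟩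

variable {K A : Type*} [Field K] [CommRing A] [Algebra K A] {𝒜 : ℕ → Submodule K A}
  [GradedAlgebra 𝒜]

theorem eq_top_of_degree_one_le (hstd : ∀ i, 𝒜 i = 𝒜 1 ^ i) {S : Subalgebra K A}
    (hS : 𝒜 1 ≤ S.toSubmodule) : S = ⊤ := by
  rw [← Algebra.toSubmodule_eq_top, eq_top_iff,
    ← (DirectSum.Decomposition.isInternal 𝒜).submodule_iSup_eq_top]
  refine iSup_le fun i ↦ ?_
  rw [hstd]
  refine (pow_le_pow_left' hS i).trans ?_
  cases i with
  | zero => simp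
  | succ i => rw [S.isIdempotentElem_toSubmodule.pow_succ_eq]

theorem finiteType_of_degree_one_finite (hstd : ∀ i, 𝒜 i = 𝒜 1 ^ i) [Module.Finite K (𝒜 1)] :
    Algebra.FiniteType K A := by
  obtain ⟨s, hs⟩ := (Module.Finite.iff_fg (N := 𝒜 1)).1 ‹_›
  exact ⟨s, eq_top_of_degree_one_le hstd (hs.ge.trans (Algebra.span_le_adjoin K _))⟩

theorem isMaximal_of_degree_one_le (hstd : ∀ i, 𝒜 i = 𝒜 1 ^ i) {P : Ideal A} (hP : P ≠ ⊤)
    (hle : 𝒜 1 ≤ P.restrictScalars K) : P.IsMaximal := by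
  have hscalar : (⊥ : Subalgebra K (A ⧸ P)).comap (Ideal.Quotient.mkₐ K P) = ⊤ :=
    eq_top_of_degree_one_le hstd fun x hx ↦ by
      have hx0 : Ideal.Quotient.mk P x = 0 := Ideal.Quotient.eq_zero_iff_mem.2 (hle hx)
      simp [hx0]
  have := Ideal.Quotient.nontrivial_iff.2 hP
  have hbij : Function.Bijective (algebraMap K (A ⧸ P)) := by
    refine ⟨(algebraMap K (A ⧸ P)).injective, fun y ↦ ?_⟩
    obtain ⟨x, rfl⟩ := Ideal.Quotient.mk_surjective y
    have hx : x ∈ (⊥ : Subalgebra K (A ⧸ P)).comap (Ideal.Quotient.mkₐ K P) := hscalar ▸ trivial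
    exact Algebra.mem_bot.1 hx
  exact Ideal.Quotient.maximal_of_isField P
    ((RingEquiv.ofBijective _ hbij).symm.toMulEquiv.isField (Field.toIsField K))

theorem exists_linear_finite_quotient [Infinite K] (hstd : ∀ i, 𝒜 i = 𝒜 1 ^ i)
    [Module.Finite K (𝒜 1)] {n : ℕ} {I : Ideal A} (hI : ringKrullDim (A ⧸ I) ≤ n) :
    ∃ θ : Fin n → A, (∀ j, θ j ∈ 𝒜 1) ∧
      Module.Finite K (A ⧸ (I ⊔ Ideal.span (Set.range θ))) := by
  have := finiteType_of_degree_one_finite hstd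
  have := Algebra.FiniteType.isNoetherianRing K A
  induction n generalizing I with
  | zero =>
    refine ⟨Fin.elim0, fun j ↦ j.elim0, ?_⟩
    rw [Set.range_eq_empty, Ideal.span_empty, sup_bot_eq, Module.finite_iff_krullDimLE_zero]
    exact Ring.krullDimLE_iff.2 hI
  | succ n ih =>
    obtain ⟨x, hx, hxI⟩ :=
      exists_mem_forall_mem_imp_le (𝒜 1) <|
        (I.finite_minimalPrimes_of_isNoetherianRing A).image (Submodule.restrictScalars K)
    obtain ⟨θ, hθ, hfinite⟩ := ih <| ringKrullDim_quotient_sup_span_singleton_le hI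
      fun P hP hxP ↦ isMaximal_of_degree_one_le hstd hP.1.1.ne_top <|
        hxI _ ⟨P, hP, rfl⟩ hxP
    refine ⟨Fin.cons x θ, Fin.cases hx hθ, ?_⟩
    rwa [Fin.range_cons, Ideal.span_insert, ← sup_assoc]

end LinearParameters

section HilbertSeries

open RingTheory.Sequence

theorem finrank_map_add_finrank_inf_ker {K V W : Type*} [DivisionRing K] [AddCommGroup V]
    [Module K V] [AddCommGroup W] [Module K W] (f : V →ₗ[K] W) (p : Submodule K V)
    [FiniteDimensional K p] :
    Module.finrank K (p.map f) + Module.finrank K (p ⊓ f.ker : Submodule K V) =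
      Module.finrank K p := by
  rw [← (f.domRestrict p).finrank_range_add_finrank_ker, LinearMap.range_domRestrict,
    LinearMap.ker_domRestrict, ← Submodule.map_comap_subtype, Submodule.finrank_map_subtype_eq]

variable {K A : Type*} [Field K] [CommRing A] [Algebra K A] (𝒜 : ℕ → Submodule K A)

/-- The degree `i` component of `A ⧸ I`, for a homogeneous ideal `I`. -/
def quotientComponent (I : Ideal A) (i : ℕ) : Submodule K (A ⧸ I) :=
  (𝒜 i).map (Ideal.Quotient.mkₐ K I).toLinearMap

/-- The Hilbert series of `A ⧸ I`, for a homogeneous ideal `I`. -/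
noncomputable def hilbertSeries (I : Ideal A) : PowerSeries ℤ :=
  .mk fun i ↦ Module.finrank K (quotientComponent 𝒜 I i)

theorem hilbertSeries_bot :
    hilbertSeries 𝒜 ⊥ = .mk fun i ↦ (Module.finrank K (𝒜 i) : ℤ) := by
  ext i
  rw [hilbertSeries, PowerSeries.coeff_mk, PowerSeries.coeff_mk, Nat.cast_inj]
  exact (AlgEquiv.quotientBot K A).symm.toLinearEquiv.finrank_map_eq (𝒜 i)

variable {𝒜}

theorem map_factorₐ_quotientComponent {I J : Ideal A} (h : I ≤ J) (i : ℕ) :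
    (quotientComponent 𝒜 I i).map (Ideal.Quotient.factorₐ K h).toLinearMap =
      quotientComponent 𝒜 J i := by
  rw [quotientComponent, quotientComponent, ← Submodule.map_comp]
  rfl

variable [GradedAlgebra 𝒜] {I : Ideal A} {θ : A}

theorem exists_sub_decompose_mul_mem_of_mem_sup_span_singleton (hI : I.IsHomogeneous 𝒜) {i : ℕ}
    {x : A} (hx : x ∈ 𝒜 i) (hxI : x ∈ I ⊔ Ideal.span {θ}) :
    ∃ a, x - DirectSum.decompose 𝒜 (θ * a) i ∈ I := by
  rw [sup_comm, Ideal.mem_span_singleton_sup] at hxI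
  obtain ⟨a, b, hb, rfl⟩ := hxI
  refine ⟨a, ?_⟩
  rw [← DirectSum.decompose_of_mem_same 𝒜 hx, DirectSum.decompose_add, DirectSum.add_apply,
    Submodule.coe_add, mul_comm, add_sub_cancel_left]
  exact hI i hb

theorem mem_of_mem_sup_span_singleton_of_mem_zero (hI : I.IsHomogeneous 𝒜) (hθ : θ ∈ 𝒜 1)
    {x : A} (hx : x ∈ 𝒜 0) (hxI : x ∈ I ⊔ Ideal.span {θ}) : x ∈ I := by
  obtain ⟨a, ha⟩ := exists_sub_decompose_mul_mem_of_mem_sup_span_singleton hI hx hxI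
  rwa [DirectSum.coe_decompose_mul_of_left_mem_of_not_le 𝒜 hθ (by lia), sub_zero] at ha

theorem exists_sub_mul_mem_of_mem_sup_span_singleton (hI : I.IsHomogeneous 𝒜) (hθ : θ ∈ 𝒜 1)
    {i : ℕ} {x : A} (hx : x ∈ 𝒜 (i + 1)) (hxI : x ∈ I ⊔ Ideal.span {θ}) :
    ∃ a ∈ 𝒜 i, x - θ * a ∈ I := by
  obtain ⟨a, ha⟩ := exists_sub_decompose_mul_mem_of_mem_sup_span_singleton hI hx hxI
  rw [DirectSum.coe_decompose_mul_of_left_mem_of_le 𝒜 hθ (by lia), Nat.add_sub_cancel] at ha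
  exact ⟨_, SetLike.coe_mem _, ha⟩

theorem quotientComponent_zero_inf_ker_factorₐ (hI : I.IsHomogeneous 𝒜) (hθ : θ ∈ 𝒜 1) :
    quotientComponent 𝒜 I 0 ⊓
      (Ideal.Quotient.factorₐ K (le_sup_left : I ≤ I ⊔ Ideal.span {θ})).toLinearMap.ker = ⊥ := by
  rw [eq_bot_iff]
  rintro _ ⟨⟨x, hx, rfl⟩, hker⟩
  exact Ideal.Quotient.eq_zero_iff_mem.2 <| mem_of_mem_sup_span_singleton_of_mem_zero hI hθ hx <|
    Ideal.Quotient.eq_zero_iff_mem.1 hker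

theorem quotientComponent_succ_inf_ker_factorₐ (hI : I.IsHomogeneous 𝒜) (hθ : θ ∈ 𝒜 1) (i : ℕ) :
    quotientComponent 𝒜 I (i + 1) ⊓
      (Ideal.Quotient.factorₐ K (le_sup_left : I ≤ I ⊔ Ideal.span {θ})).toLinearMap.ker =
      (quotientComponent 𝒜 I i).map (Algebra.lsmul K K (A ⧸ I) θ) := by
  refine le_antisymm ?_ ?_
  · rintro _ ⟨⟨x, hx, rfl⟩, hker⟩
    obtain ⟨a, ha, hxa⟩ := exists_sub_mul_mem_of_mem_sup_span_singleton hI hθ hx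
      (Ideal.Quotient.eq_zero_iff_mem.1 hker)
    exact ⟨_, ⟨a, ha, rfl⟩, (Ideal.Quotient.eq.2 hxa).symm⟩
  · rintro _ ⟨_, ⟨a, ha, rfl⟩, rfl⟩
    refine ⟨⟨θ * a, add_comm i 1 ▸ SetLike.mul_mem_graded hθ ha, rfl⟩, ?_⟩
    exact Ideal.Quotient.eq_zero_iff_mem.2 <|
      Ideal.mul_mem_right _ _ (Ideal.mem_sup_right (Ideal.mem_span_singleton_self θ))

theorem hilbertSeries_sup_span_singleton (hfin : ∀ i, Module.Finite K (𝒜 i))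
    (hI : I.IsHomogeneous 𝒜) (hθ : θ ∈ 𝒜 1) (hreg : IsSMulRegular (A ⧸ I) θ) :
    hilbertSeries 𝒜 (I ⊔ Ideal.span {θ}) = hilbertSeries 𝒜 I * (1 - .X) := by
  ext i
  have : Module.Finite K (quotientComponent 𝒜 I i) := Module.Finite.map _ _
  have hrank := finrank_map_add_finrank_inf_ker
    (Ideal.Quotient.factorₐ K (le_sup_left : I ≤ I ⊔ Ideal.span {θ})).toLinearMap
    (quotientComponent 𝒜 I i)
  rw [map_factorₐ_quotientComponent] at hrank
  rw [mul_sub, mul_one, map_sub, hilbertSeries, hilbertSeries, PowerSeries.coeff_mk,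
    PowerSeries.coeff_mk, ← hrank]
  cases i with
  | zero =>
    rw [quotientComponent_zero_inf_ker_factorₐ hI hθ]
    simp
  | succ i =>
    rw [quotientComponent_succ_inf_ker_factorₐ hI hθ,
      ← (Submodule.equivMapOfInjective (Algebra.lsmul K K (A ⧸ I) θ) hreg _).finrank_eq]
    simp [PowerSeries.coeff_succ_mul_X]

theorem hilbertSeries_ofList (hfin : ∀ i, Module.Finite K (𝒜 i)) {L : List A}
    (hL : ∀ θ ∈ L, θ ∈ 𝒜 1) (hreg : IsWeaklyRegular A L) :
    hilbertSeries 𝒜 (Ideal.ofList L) = hilbertSeries 𝒜 ⊥ * (1 - .X) ^ L.length := by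
  induction L using List.reverseRecOn with
  | nil => simp
  | append_singleton L θ ih =>
    rw [isWeaklyRegular_append_iff, isWeaklyRegular_singleton_iff, smul_eq_mul,
      Ideal.mul_top] at hreg
    have hhom : (Ideal.ofList L).IsHomogeneous 𝒜 :=
      Ideal.homogeneous_span 𝒜 _ fun θ' hθ' ↦ ⟨1, hL θ' (List.mem_append_left _ hθ')⟩
    rw [Ideal.ofList_append, Ideal.ofList_singleton,
      hilbertSeries_sup_span_singleton hfin hhom (hL θ (by simp)) hreg.2,
      ih (fun θ' hθ' ↦ hL θ' (List.mem_append_left _ hθ')) hreg.1, List.length_append,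
      List.length_singleton, pow_succ, mul_assoc]

theorem coeff_nonneg_of_isWeaklyRegular (hfin : ∀ i, Module.Finite K (𝒜 i)) {L : List A}
    (hL : ∀ θ ∈ L, θ ∈ 𝒜 1) (hreg : IsWeaklyRegular A L) {h : Polynomial ℤ}
    (hh : (h : PowerSeries ℤ) = hilbertSeries 𝒜 ⊥ * (1 - .X) ^ L.length) (j : ℕ) :
    0 ≤ h.coeff j := by
  rw [← Polynomial.coeff_coe, hh, ← hilbertSeries_ofList hfin hL hreg, hilbertSeries,
    PowerSeries.coeff_mk]
  exact Nat.cast_nonneg _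

end HilbertSeries

theorem finrank_one_eq_one {K A : Type*} [Field K] [Ring A] [Nontrivial A] [Algebra K A] :
    Module.finrank K (1 : Submodule K A) = 1 := by
  rw [Submodule.one_eq_span]
  exact finrank_span_singleton one_ne_zero

theorem veronese_g_polynomial_is_f_polynomial_general {K A : Type*} [Field K] [Infinite K]
    [CommRing A] [Algebra K A] {𝒜 : ℕ → Submodule K A} [GradedAlgebra 𝒜]
    (hstd : ∀ i, 𝒜 i = 𝒜 1 ^ i) (hfin : ∀ i, Module.Finite K (𝒜 i))
    {d : ℕ} (hdim : ringKrullDim A = d)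
    (hCM : ∀ θ : Fin d → A, (∀ j, θ j ∈ 𝒜 1) → Module.Finite K (A ⧸ Ideal.span (Set.range θ)) →
      RingTheory.Sequence.IsRegular A (List.ofFn θ))
    {h : Polynomial ℤ}
    (hh : (h : PowerSeries ℤ) = (.mk fun i ↦ (Module.finrank K (𝒜 i) : ℤ)) * (1 - .X) ^ d)
    {r : ℕ} (hr : 1 ≤ r) (hdeg : h.natDegree ≤ r) {p : Polynomial ℤ}
    (hp : (p : PowerSeries ℤ) =
      (.mk fun i ↦ (Module.finrank K (𝒜 (i * r)) : ℤ)) * (1 - .X) ^ d) :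
    IsFVector fun i ↦ if i = 0 then p.coeff 0
      else if i ≤ p.natDegree / 2 then p.coeff i - p.coeff (i - 1) else 0 := by
  obtain ⟨m, rfl⟩ := Nat.exists_eq_add_of_le' hr
  have hA : Nontrivial A := by
    by_contra hA
    rw [not_nontrivial_iff_subsingleton] at hA
    simp [ringKrullDim_eq_bot_of_subsingleton] at hdim
  have hrank : (Module.finrank K (𝒜 0) : ℤ) = 1 := by
    rw [hstd, pow_zero, finrank_one_eq_one, Nat.cast_one]
  have hone : h.coeff 0 = 1 := by rw [← Polynomial.coeff_coe, hh]; simp [hrank]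
  have hnonneg (j : ℕ) : 0 ≤ h.coeff j := by
    have := hfin 1
    obtain ⟨θ, hθ, hfinite⟩ := exists_linear_finite_quotient hstd (I := ⊥) (n := d)
      (by rw [ringKrullDim_eq_of_ringEquiv (RingEquiv.quotientBot A), hdim])
    rw [bot_sup_eq] at hfinite
    refine coeff_nonneg_of_isWeaklyRegular hfin ?_ (hCM θ hθ hfinite).toIsWeaklyRegular ?_ j
    · simpa [List.mem_ofFn] using hθ
    · rw [hilbertSeries_bot, List.length_ofFn, hh]
  have hVeronese : IsVeroneseNumerator m d h p := isVeroneseNumerator_of_mul_pow hh <| by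
    simpa only [veronese, PowerSeries.coeff_mk] using hp
  convert hVeronese.isFVector hdeg hnonneg hone using 2 with i
  rw [coeff_mul_one_sub_X]
  split_ifs <;> lia

/-- **Theorem 1.3(ii) (second part), Kubitzke–Murai.**
Let `K` be a field of characteristic `0` and `A` a Cohen-Macaulay standard graded `K`-algebra
of Krull dimension `d` with `h`-polynomial `h = h_A(t)` (so that `Hilb(A,t) = h/(1-t)^d`),
and let `hr = h_{A^⟨r⟩}(t) = h₀^⟨r⟩ + h₁^⟨r⟩ t + ⋯` be the `h`-polynomial of the `r`-th
Veronese subalgebra `A^⟨r⟩ = ⊕_i A_{ir}`, of degree `s`.  If `r ≥ deg h_A(t)`, then the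
`g`-polynomial `g_{A^⟨r⟩}(t) = h₀^⟨r⟩ + (h₁^⟨r⟩-h₀^⟨r⟩)t + ⋯ +
(h_{⌊s/2⌋}^⟨r⟩ - h_{⌊s/2⌋-1}^⟨r⟩)t^{⌊s/2⌋}` is the `f`-polynomial of a simplicial complex
`Δ`: `∅ ∈ Δ`, `Δ` is closed under subsets, and for every `i` the number of faces of `Δ` of
cardinality `i` equals the coefficient of `tⁱ` in `g_{A^⟨r⟩}(t)`. -/
theorem veronese_g_polynomial_is_f_polynomial
    (K : Type*) [Field K] [CharZero K]
    (A : Type*) [CommRing A] [Algebra K A]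
    (𝒜 : ℕ → Submodule K A) [GradedAlgebra 𝒜]
    (hstd : ∀ i, 𝒜 i = 𝒜 1 ^ i)
    (hfin : ∀ i, Module.Finite K (𝒜 i))
    (d : ℕ) (hdim : ringKrullDim A = d)
    (hCM : ∀ θ' : Fin d → A, (∀ j, θ' j ∈ 𝒜 1) →
      Module.Finite K (A ⧸ Ideal.span (Set.range θ')) →
      RingTheory.Sequence.IsRegular A (List.ofFn θ'))
    (h : Polynomial ℤ)
    (hh : (h : PowerSeries ℤ) =
      (PowerSeries.mk fun i => (Module.finrank K (𝒜 i) : ℤ)) * (1 - PowerSeries.X) ^ d)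
    (r : ℕ) (hr : 1 ≤ r) (hrbound : h.natDegree ≤ r)
    (hrpoly : Polynomial ℤ)
    (hhr : (hrpoly : PowerSeries ℤ) =
      (PowerSeries.mk fun i => (Module.finrank K (𝒜 (i * r)) : ℤ)) * (1 - PowerSeries.X) ^ d) :
    ∃ (n : ℕ) (Δ : Finset (Finset (Fin n))),
      ∅ ∈ Δ ∧
      (∀ F ∈ Δ, ∀ G ⊆ F, G ∈ Δ) ∧
      (∀ i : ℕ, ((Δ.filter fun F => F.card = i).card : ℤ) =
        if i = 0 then hrpoly.coeff 0
        else if i ≤ hrpoly.natDegree / 2 then hrpoly.coeff i - hrpoly.coeff (i - 1)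
        else 0) :=
  veronese_g_polynomial_is_f_polynomial_general hstd hfin hdim hCM hh hr hrbound hhr
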